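/- arXiv:math/0410010 — 3 statements merged into one kernel-verified Lean document; each statement's English description precedes it below -/
import Mathlib

section
/- Let K be a number field that is a Galois extension of ℚ, and let p be a prime not dividing the discriminant of K whose residue degree in K is r > 1. Let M ≥ 2, α ≥ 1 with r ∤ (α − 1), and let a_1,…,a_M be positive integers and b_1,…,b_M integers such that p ∤ a_m for all m and p ∤ (a_m b_k − a_k b_m) for all m ≠ k. If a positive integer k lies in Ω(p^α), then there exists m ∈ {1,…,M} such that there is no nonzero integral ideal of 𝓞_K of absolute norm equal to a_m k + b_m (in particular ∏_{m=1}^M b_K(a_m k + b_m) = 0). -/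
/-!
Every nonzero ideal of `𝓞 K` is a product of primes. A prime containing `p` has norm `p ^ r`, and
the norm of any other prime is coprime to `p`, so `r` divides the `p`-adic valuation of every ideal
norm (`dvd_factorization_absNorm`). The congruence defining `Ω(p^α)` forces the value
`a_m k + b_m`, for the index `m` it provides, to have `p`-adic valuation exactly `α - 1`, which is
not a multiple of `r`.
-/

open NumberField

/-- If all primes above `p` have norm `p ^ r`, the exponent of `p` in the norm of a nonzero ideal
is a multiple of `r`. -/
lemma dvd_factorization_absNorm (K : Type) [Field K] [NumberField K] (p : ℕ) (hp : p.Prime) (r : ℕ)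
    (hres : ∀ P : Ideal (𝓞 K), P.IsPrime → (p : 𝓞 K) ∈ P → Ideal.absNorm P = p ^ r)
    (I : Ideal (𝓞 K)) (hI : I ≠ ⊥) : r ∣ (Ideal.absNorm I).factorization p := by
  induction I using UniqueFactorizationMonoid.induction_on_prime with
  | h₁ => exact absurd rfl hI
  | h₂ J hJ => rw [Ideal.isUnit_iff.mp hJ]; simp
  | h₃ J P hJ hP ih =>
    have hPp : P.IsPrime := Ideal.isPrime_of_prime hP
    have hP0 : Ideal.absNorm P ≠ 0 := fun h => hP.ne_zero (Ideal.absNorm_eq_zero_iff.mp h)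
    have hJ0 : Ideal.absNorm J ≠ 0 := fun h => hJ (Ideal.absNorm_eq_zero_iff.mp h)
    rw [map_mul, Nat.factorization_mul hP0 hJ0, Finsupp.add_apply]
    refine dvd_add ?_ (ih hJ)
    by_cases hpP : (p : 𝓞 K) ∈ P
    · rw [hres P hPp hpP, hp.factorization_pow]
      simp
    · have hPm : P.IsMaximal := hPp.isMaximal hP.ne_zero
      rw [Nat.factorization_eq_zero_of_not_dvd]
      · exact dvd_zero r
      · intro hdvd
        obtain ⟨q, n, -, hqP, hq, hqn⟩ := Ideal.exists_prime_and_absNorm_eq_pow P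
        rw [hqn] at hdvd
        -- The norm of `P` is a power of the rational prime `q ∈ P`, so `p = q` would lie in `P`.
        exact hpP (((Nat.prime_dvd_prime_iff_eq hp hq).mp (hp.dvd_of_dvd_pow hdvd)) ▸ hqP)

/-- If `p` is unramified in the Galois extension `K/ℚ` with residue degree `r > 1`,
`r ∤ (α−1)`, and the positive integer `k` lies in `Ω(p^α)`, then for some `m` there is
no nonzero integral ideal of `𝓞_K` of absolute norm `a_m k + b_m`. -/
theorem stmt_7 (K : Type) [Field K] [NumberField K] [IsGalois ℚ K]
    (p : ℕ) (hp : p.Prime) (hpd : ¬ (p : ℤ) ∣ NumberField.discr K)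
    (r : ℕ) (hr : 1 < r)
    (hres : ∀ P : Ideal (𝓞 K), P.IsPrime → (p : 𝓞 K) ∈ P → Ideal.absNorm P = p ^ r)
    (M : ℕ) (hM : 2 ≤ M) (α : ℕ) (hα : 1 ≤ α) (hrα : ¬ r ∣ (α - 1))
    (a : Fin M → ℕ) (b : Fin M → ℤ) (ha : ∀ m, 0 < a m)
    (hpa : ∀ m, ¬ p ∣ a m)
    (hpab : ∀ m k : Fin M, m ≠ k → ¬ (p : ℤ) ∣ ((a m : ℤ) * b k - (a k : ℤ) * b m))
    (k : ℕ) (hk : 0 < k)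
    (hΩ : ∃ m : Fin M, ∃ j : ℕ, j ∈ Finset.Icc 1 (p - 1) ∧
      (a m : ℤ) * (k : ℤ) ≡ (j : ℤ) * (p : ℤ) ^ (α - 1) - b m [ZMOD (p : ℤ) ^ α]) :
    ∃ m : Fin M, ¬ ∃ I : Ideal (𝓞 K), I ≠ ⊥ ∧
      (Ideal.absNorm I : ℤ) = (a m : ℤ) * (k : ℤ) + b m := by
  obtain ⟨m, j, hj, hmod⟩ := hΩ
  refine ⟨m, ?_⟩
  rintro ⟨I, hI, hN⟩
  apply hrα
  have key := dvd_factorization_absNorm K p hp r hres I hI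
  obtain ⟨β, rfl⟩ : ∃ β, α = β + 1 := ⟨α - 1, by omega⟩
  simp only [Nat.add_sub_cancel] at hmod ⊢
  obtain ⟨hj1, hj2⟩ := Finset.mem_Icc.mp hj
  have hp1 := hp.one_lt
  obtain ⟨c, hc⟩ := hmod.dvd
  have hN0 : Ideal.absNorm I ≠ 0 := fun h => hI (Ideal.absNorm_eq_zero_iff.mp h)
  -- The norm equals `p ^ β * (j - p * c)` with `0 < j < p`.
  have hN' : (Ideal.absNorm I : ℤ) = (p : ℤ) ^ β * (j - p * c) := by
    rw [hN]; linear_combination -hc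
  have hval : (Ideal.absNorm I).factorization p = β := by
    apply le_antisymm
    · by_contra! hlt
      have hd : p ^ (β + 1) ∣ Ideal.absNorm I :=
        (hp.pow_dvd_iff_le_factorization hN0).mpr hlt
      have hd' : (p : ℤ) ^ β * p ∣ (p : ℤ) ^ β * (j - p * c) := by
        rw [← hN', ← pow_succ]
        exact_mod_cast hd
      have hpj := (mul_dvd_mul_iff_left (pow_ne_zero β
        (Int.natCast_ne_zero.mpr hp.ne_zero))).mp hd'
      have hpj' : (p : ℤ) ∣ j := (dvd_sub_left (dvd_mul_right _ _)).mp hpj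
      have := Nat.le_of_dvd (by omega) (Int.natCast_dvd_natCast.mp hpj')
      omega
    · refine (hp.pow_dvd_iff_le_factorization hN0).mp ?_
      have : (p : ℤ) ^ β ∣ (Ideal.absNorm I : ℤ) := hN' ▸ dvd_mul_right _ _
      exact_mod_cast this
  rwa [hval] at key
end

section
/- Let K be a number field that is a Galois extension of ℚ of degree N ≥ 2, and let Π₁ be the set of rational primes p not dividing the discriminant of K that split completely in K (equivalently, have residue degree 1 in K). Then there exists a constant c > 0 such that (s−1) · ∏_{p∈Π₁} (1 − p^{−s})^{−N} → c as s → 1⁺ (s real). -/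
/-!
The Dedekind zeta function `ζ_K(s) = ∑ N(I)^(-s)` has a simple pole at `s = 1` with positive residue
(the class number formula), so the claim follows by comparing the product over split primes with
the Euler product of `ζ_K`.

The Euler product is obtained by a sieve (`sieve`, `hasSum_eulerLog`): multiplying `ζ_K(s)` by
`1 - N(v)^(-s)` for `v` in a finite set `S` of primes leaves the sum over ideals prime to `S`, and
this tends to `1` as `S` grows. It is used in logarithmic form, where unconditional sums can be cut
along subsets of the primes.

The primes `v` of `K` are divided according to whether the rational prime below splits completely.
Above a split `p` there are exactly `N` primes, all of norm `p`, so these factors give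
`(1 - p^(-s))^(-N)` (`hasProd_split`). The remaining `v` are either ramified, hence finitely many, or
of norm at least `p²` because `K/ℚ` is Galois; their Euler factors therefore converge, by dominated
convergence, to a positive limit as `s → 1⁺` (`tendsto_nonsplit`).
-/

open NumberField Filter
open IsDedekindDomain Topology

/-- The rational primes not dividing the discriminant that split completely in `K`. -/
def splitPrimes (K : Type) [Field K] [NumberField K] : Set ℕ :=
  {p : ℕ | p.Prime ∧ ¬ (p : ℤ) ∣ NumberField.discr K ∧
    ∀ P : Ideal (𝓞 K), P.IsPrime → ((p : ℕ) : 𝓞 K) ∈ P → Ideal.absNorm P = (p : ℕ)}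

/-- The rational prime below `v`, taken as the positive generator of `v ∩ ℤ`. -/
noncomputable def residueChar {K : Type} [Field K] [NumberField K]
    (v : HeightOneSpectrum (𝓞 K)) : ℕ :=
  Ideal.absNorm (v.asIdeal.under ℤ)

/-- The logarithm of the Euler factor `(1 - N(v)^(-s))⁻¹` of the Dedekind zeta function at `v`. -/
noncomputable def eulerLog {K : Type} [Field K] [NumberField K] (s : ℝ)
    (v : HeightOneSpectrum (𝓞 K)) : ℝ :=
  -Real.log (1 - (Ideal.absNorm v.asIdeal : ℝ) ^ (-s))

section
variable {K : Type} [Field K] [NumberField K]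

/-! ### Primes above a rational prime -/

lemma residueChar_prime (v : HeightOneSpectrum (𝓞 K)) : (residueChar v).Prime := by
  have : NeZero v.asIdeal := ⟨v.ne_bot⟩
  have := v.isPrime
  exact Nat.absNorm_under_prime v.asIdeal

lemma under_eq (v : HeightOneSpectrum (𝓞 K)) :
    v.asIdeal.under ℤ = Ideal.span {(residueChar v : ℤ)} :=
  (Int.ideal_span_absNorm_eq_self _).symm

lemma liesOver_residueChar (v : HeightOneSpectrum (𝓞 K)) :
    v.asIdeal.LiesOver (Ideal.span {(residueChar v : ℤ)}) :=
  ⟨(under_eq v).symm⟩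

lemma residueChar_pow_inertiaDeg (v : HeightOneSpectrum (𝓞 K)) :
    residueChar v ^ v.asIdeal.inertiaDeg ℤ = Ideal.absNorm v.asIdeal := by
  have := liesOver_residueChar v
  have := v.isPrime
  exact Ideal.pow_inertiaDeg _ _

lemma residueChar_eq_iff {p : ℕ} (hp : p.Prime) (v : HeightOneSpectrum (𝓞 K)) :
    residueChar v = p ↔ v.asIdeal ∈ (Ideal.span {(p : ℤ)}).primesOver (𝓞 K) := by
  constructor
  · rintro rfl
    exact ⟨v.isPrime, liesOver_residueChar v⟩
  · rintro ⟨_, h⟩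
    rw [residueChar, ← h.over]
    simp

lemma card_fiber {p : ℕ} (hp : p.Prime) :
    Nat.card {v : HeightOneSpectrum (𝓞 K) // residueChar v = p} =
      ((Ideal.span {(p : ℤ)}).primesOver (𝓞 K)).ncard := by
  rw [← Nat.card_coe_set_eq]
  refine Nat.card_congr (Equiv.ofBijective
    (fun v => ⟨v.1.asIdeal, (residueChar_eq_iff hp v.1).1 v.2⟩) ⟨?_, ?_⟩)
  · intro v w h
    exact Subtype.ext (HeightOneSpectrum.ext (congrArg Subtype.val h))
  · rintro ⟨P, hP, hP'⟩
    have hP0 : P ≠ ⊥ := by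
      refine Ideal.ne_bot_of_liesOver_of_ne_bot (p := Ideal.span {(p : ℤ)}) ?_ P
      simpa using hp.ne_zero
    exact ⟨⟨⟨P, hP, hP0⟩, (residueChar_eq_iff hp _).2 ⟨hP, hP'⟩⟩, rfl⟩

lemma finite_fiber (p : ℕ) : Finite {v : HeightOneSpectrum (𝓞 K) // residueChar v = p} := by
  by_cases hp : p.Prime
  · have hfin : ((Ideal.span {(p : ℤ)}).primesOver (𝓞 K)).Finite :=
      have : (Ideal.span {(p : ℤ)}).IsPrime := by
        rw [Ideal.span_singleton_prime (by exact_mod_cast hp.ne_zero)]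
        exact Nat.prime_iff_prime_int.mp hp
      Algebra.QuasiFinite.finite_primesOver _
    have := hfin.to_subtype
    exact Finite.of_injective
      (fun v => (⟨v.1.asIdeal, (residueChar_eq_iff hp v.1).1 v.2⟩ :
        (Ideal.span {(p : ℤ)}).primesOver (𝓞 K)))
      fun v w h => Subtype.ext (HeightOneSpectrum.ext (congrArg Subtype.val h))
  · have : IsEmpty {v : HeightOneSpectrum (𝓞 K) // residueChar v = p} :=
      ⟨fun v => hp (v.2 ▸ residueChar_prime v.1)⟩
    infer_instance

lemma absNorm_eq_of_split {v : HeightOneSpectrum (𝓞 K)} (h : residueChar v ∈ splitPrimes K) :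
    Ideal.absNorm v.asIdeal = residueChar v := by
  refine h.2.2 _ v.isPrime ?_
  have := (Ideal.liesOver_span_iff v.isPrime.ne_top
    (Nat.prime_iff_prime_int.mp (residueChar_prime v))).1 (liesOver_residueChar v)
  simpa using this

/-! ### The Euler product of the Dedekind zeta function -/

/-- Near `1⁺` the Dedekind zeta function is the sum of `N(I)^(-s)` over all ideals `I`; the zero ideal
contributes `0 ^ (-s) = 0`. Summability is read off from the class number formula: a non-summable
series would have value `0`, contradicting the nonzero residue. -/
lemma eventually_summable : ∀ᶠ s : ℝ in 𝓝[>] 1,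
    Summable (fun I : Ideal (𝓞 K) => (Ideal.absNorm I : ℝ) ^ (-s)) ∧
      dedekindZeta K s = ((∑' I : Ideal (𝓞 K), (Ideal.absNorm I : ℝ) ^ (-s) : ℝ) : ℂ) := by
  have hne : ∀ᶠ s : ℝ in 𝓝[>] 1, ((s - 1 : ℂ)) * dedekindZeta K s ≠ 0 :=
    (tendsto_sub_one_mul_dedekindZeta_nhdsGT K).eventually_ne
      (by exact_mod_cast dedekindZeta_residue_ne_zero K)
  filter_upwards [hne, self_mem_nhdsWithin] with s hs hs1
  have hs0 : -s ≠ 0 := by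
    have : (1 : ℝ) < s := hs1
    linarith
  have hterm : ∀ n : ℕ, LSeries.term
      (fun n ↦ (Nat.card {I : Ideal (𝓞 K) // Ideal.absNorm I = n} : ℂ)) s n =
      ((Nat.card {I : Ideal (𝓞 K) // Ideal.absNorm I = n} * (n : ℝ) ^ (-s) : ℝ) : ℂ) := by
    intro n
    rcases eq_or_ne n 0 with rfl | hn
    · simp [Real.zero_rpow hs0]
    · rw [LSeries.term_of_ne_zero hn, div_eq_mul_inv, ← Complex.cpow_neg]
      push_cast
      rw [Complex.ofReal_cpow (by positivity)]
      push_cast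
      rfl
  have hsum : Summable (fun n : ℕ =>
      (Nat.card {I : Ideal (𝓞 K) // Ideal.absNorm I = n} * (n : ℝ) ^ (-s) : ℝ)) := by
    by_contra hcon
    refine hs ?_
    rw [dedekindZeta, LSeries, funext hterm, tsum_eq_zero_of_not_summable, mul_zero]
    rwa [Complex.summable_ofReal]
  have hfin : ∀ n : ℕ, Finite {I : Ideal (𝓞 K) // Ideal.absNorm I = n} := fun n =>
    (Ideal.finite_setOfPred_absNorm_eq n).to_subtype
  let e := Equiv.sigmaFiberEquiv (fun I : Ideal (𝓞 K) => Ideal.absNorm I)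
  have he : ∀ x : (Σ n, {I : Ideal (𝓞 K) // Ideal.absNorm I = n}),
      ((Ideal.absNorm (e x) : ℝ) ^ (-s)) = (x.1 : ℝ) ^ (-s) := by
    rintro ⟨n, I, rfl⟩
    rfl
  have hfib : ∀ n : ℕ, ∑' _I : {I : Ideal (𝓞 K) // Ideal.absNorm I = n}, (n : ℝ) ^ (-s) =
      Nat.card {I : Ideal (𝓞 K) // Ideal.absNorm I = n} * (n : ℝ) ^ (-s) := by
    intro n
    rw [tsum_const, nsmul_eq_mul]
  have hS : Summable (fun x : (Σ n, {I : Ideal (𝓞 K) // Ideal.absNorm I = n}) =>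
      (x.1 : ℝ) ^ (-s)) := by
    rw [summable_sigma_of_nonneg (fun _ => by positivity)]
    exact ⟨fun n => Summable.of_finite, by simpa only [hfib] using hsum⟩
  constructor
  · rw [← e.summable_iff]
    exact hS.congr fun x => (he x).symm
  · rw [dedekindZeta, LSeries, funext hterm, ← Complex.ofReal_tsum, ← e.tsum_eq, tsum_congr he,
      hS.tsum_sigma]
    simp only [hfib]

lemma absNorm_two_le (v : HeightOneSpectrum (𝓞 K)) : (2 : ℝ) ≤ Ideal.absNorm v.asIdeal := by
  exact_mod_cast NumberField.HeightOneSpectrum.one_lt_absNorm v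

lemma absNorm_rpow_le_half {s : ℝ} (hs : 1 ≤ s) (v : HeightOneSpectrum (𝓞 K)) :
    (Ideal.absNorm v.asIdeal : ℝ) ^ (-s) ≤ 1 / 2 := by
  have h := absNorm_two_le v
  calc (Ideal.absNorm v.asIdeal : ℝ) ^ (-s) ≤ (Ideal.absNorm v.asIdeal : ℝ) ^ (-1 : ℝ) :=
        Real.rpow_le_rpow_of_exponent_le (by linarith) (by linarith)
    _ ≤ 1 / 2 := by
      rw [Real.rpow_neg_one, ← one_div]
      exact one_div_le_one_div_of_le (by norm_num) h

open Classical in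
/-- Multiplying the zeta function by finitely many inverse Euler factors removes the ideals divisible
by one of the corresponding primes. -/
lemma sieve {s : ℝ}
    (hs : Summable (fun I : Ideal (𝓞 K) => (Ideal.absNorm I : ℝ) ^ (-s)))
    (S : Finset (HeightOneSpectrum (𝓞 K))) :
    ∑' I : Ideal (𝓞 K), (if ∀ v ∈ S, ¬ v.asIdeal ∣ I then (Ideal.absNorm I : ℝ) ^ (-s) else 0) =
      (∑' I : Ideal (𝓞 K), (Ideal.absNorm I : ℝ) ^ (-s)) *
        ∏ v ∈ S, (1 - (Ideal.absNorm v.asIdeal : ℝ) ^ (-s)) := by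
  induction S using Finset.induction_on with
  | empty => simp
  | insert v S hv ih =>
    set g : Ideal (𝓞 K) → ℝ :=
      fun I => if ∀ w ∈ S, ¬ w.asIdeal ∣ I then (Ideal.absNorm I : ℝ) ^ (-s) else 0 with hg
    have hgs : Summable g := hs.of_nonneg_of_le
      (fun I => by simp only [hg]; split_ifs <;> positivity)
      (fun I => by simp only [hg]; split_ifs <;> first | exact le_rfl | positivity)
    set h : Ideal (𝓞 K) → ℝ := fun I => if v.asIdeal ∣ I then g I else 0 with hh
    have hhs : Summable h := by
      have : h = Set.indicator {I | v.asIdeal ∣ I} g := by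
        ext I; simp [hh, Set.indicator_apply]
      rw [this]
      exact hgs.indicator _
    have hsplit : ∀ I : Ideal (𝓞 K), (if ∀ w ∈ insert v S, ¬ w.asIdeal ∣ I then
        (Ideal.absNorm I : ℝ) ^ (-s) else 0) = g I - h I := by
      intro I
      by_cases h1 : v.asIdeal ∣ I <;> simp [hg, hh, h1]
    have hinj : Function.Injective (fun J : Ideal (𝓞 K) => v.asIdeal * J) :=
      fun J J' hJ => mul_left_cancel₀ v.ne_bot hJ
    have hmul : ∀ J, h (v.asIdeal * J) = (Ideal.absNorm v.asIdeal : ℝ) ^ (-s) * g J := by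
      intro J
      have hiff : (∀ w ∈ S, ¬ w.asIdeal ∣ v.asIdeal * J) ↔ ∀ w ∈ S, ¬ w.asIdeal ∣ J := by
        refine forall₂_congr fun w hw => not_congr ⟨fun hd => ?_, fun hd => hd.mul_left _⟩
        refine (w.prime.dvd_or_dvd hd).resolve_left fun hwv => hv ?_
        have : w = v := HeightOneSpectrum.ext
          ((v.isMaximal.eq_of_le w.isPrime.ne_top (Ideal.dvd_iff_le.1 hwv)).symm)
        rwa [← this]
      simp only [hh, hg, dvd_mul_right, if_true, hiff, mul_ite, mul_zero, map_mul, Nat.cast_mul]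
      rw [Real.mul_rpow (by positivity) (by positivity)]
    have hhsum : ∑' I, h I = (Ideal.absNorm v.asIdeal : ℝ) ^ (-s) * ∑' I, g I := by
      rw [← tsum_mul_left, ← tsum_congr hmul]
      refine (hinj.tsum_eq ?_).symm
      intro I hI
      by_contra hcon
      refine hI ?_
      have : ¬ v.asIdeal ∣ I := fun ⟨J, hJ⟩ => hcon ⟨J, hJ.symm⟩
      simp [hh, this]
    rw [tsum_congr hsplit, hgs.tsum_sub hhs, hhsum, ih, Finset.prod_insert hv]
    ring

lemma zeta_pos {s : ℝ}
    (hs : Summable (fun I : Ideal (𝓞 K) => (Ideal.absNorm I : ℝ) ^ (-s))) :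
    0 < ∑' I : Ideal (𝓞 K), (Ideal.absNorm I : ℝ) ^ (-s) :=
  hs.tsum_pos (fun I => by positivity) ⊤ (by simp)

/-- The logarithmic form of the Euler product of the Dedekind zeta function. -/
lemma hasSum_eulerLog {s : ℝ} (hs1 : 1 < s)
    (hs : Summable (fun I : Ideal (𝓞 K) => (Ideal.absNorm I : ℝ) ^ (-s))) :
    HasSum (eulerLog (K := K) s) (Real.log (∑' I : Ideal (𝓞 K), (Ideal.absNorm I : ℝ) ^ (-s))) := by
  classical
  set Z := ∑' I : Ideal (𝓞 K), (Ideal.absNorm I : ℝ) ^ (-s) with hZ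
  have hZ0 : 0 < Z := zeta_pos hs
  have hfac : ∀ v : HeightOneSpectrum (𝓞 K), 0 < 1 - (Ideal.absNorm v.asIdeal : ℝ) ^ (-s) :=
    fun v => by linarith [absNorm_rpow_le_half hs1.le v]
  have hlim : Tendsto (fun S : Finset (HeightOneSpectrum (𝓞 K)) =>
      Z * ∏ v ∈ S, (1 - (Ideal.absNorm v.asIdeal : ℝ) ^ (-s))) atTop (𝓝 1) := by
    have h1 : (1 : ℝ) = ∑' I : Ideal (𝓞 K), (if I = ⊤ then 1 else 0) := by simp
    refine Tendsto.congr (sieve hs) ?_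
    rw [h1]
    refine tendsto_tsum_of_dominated_convergence hs (fun I => ?_) (Eventually.of_forall
      fun S I => ?_)
    · by_cases hI : I = ⊤
      · subst hI
        refine tendsto_const_nhds.congr fun S => ?_
        have : ∀ v ∈ S, ¬ v.asIdeal ∣ (⊤ : Ideal (𝓞 K)) := fun v _ hd =>
          v.isPrime.ne_top (top_le_iff.1 (Ideal.dvd_iff_le.1 hd))
        rw [if_pos this]; simp
      · rw [if_neg hI]
        by_cases hb : I = ⊥
        · subst hb
          refine tendsto_const_nhds.congr fun S => ?_
          simp [Real.zero_rpow (show -s ≠ 0 by linarith)]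
        · obtain ⟨M, hM, hIM⟩ := Ideal.exists_le_maximal I hI
          let v : HeightOneSpectrum (𝓞 K) :=
            ⟨M, hM.isPrime, fun h => hb (le_bot_iff.1 (h ▸ hIM))⟩
          refine tendsto_const_nhds.congr' ?_
          filter_upwards [eventually_ge_atTop {v}] with S hS
          rw [if_neg]
          exact fun hall => hall v (hS (Finset.mem_singleton_self v)) (Ideal.dvd_iff_le.2 hIM)
    · split_ifs
      · rw [Real.norm_of_nonneg (by positivity)]
      · rw [norm_zero]; positivity
  have hlog := (hlim.log one_ne_zero).const_sub (Real.log Z)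
  rw [Real.log_one, sub_zero] at hlog
  refine hlog.congr fun S => ?_
  rw [Real.log_mul hZ0.ne' (Finset.prod_pos fun v _ => hfac v).ne',
    Real.log_prod (fun v _ => (hfac v).ne')]
  simp [eulerLog]

lemma norm_eulerLog_le {s : ℝ} (hs1 : 1 ≤ s) (v : HeightOneSpectrum (𝓞 K)) :
    ‖eulerLog s v‖ ≤ 2 * (Ideal.absNorm v.asIdeal : ℝ)⁻¹ := by
  set x := (Ideal.absNorm v.asIdeal : ℝ) ^ (-s) with hx
  have hx0 : 0 ≤ x := by positivity
  have hx2 : x ≤ 1 / 2 := absNorm_rpow_le_half hs1 v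
  have hx1 : x ≤ (Ideal.absNorm v.asIdeal : ℝ)⁻¹ := by
    rw [← Real.rpow_neg_one]
    exact Real.rpow_le_rpow_of_exponent_le (by linarith [absNorm_two_le v]) (by linarith)
  have h1 : 1 - (1 - x)⁻¹ ≤ Real.log (1 - x) := Real.one_sub_inv_le_log_of_pos (by linarith)
  have h2 : Real.log (1 - x) ≤ 0 := Real.log_nonpos (by linarith) (by linarith)
  have h3 : (1 - x)⁻¹ ≤ 1 + 2 * x := by
    rw [inv_le_iff_one_le_mul₀ (by linarith)]
    nlinarith
  rw [eulerLog, norm_neg, Real.norm_of_nonpos h2]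
  linarith

lemma finite_ramified :
    {v : HeightOneSpectrum (𝓞 K) | (residueChar v : ℤ) ∣ discr K}.Finite := by
  have hfin : {n : ℕ | (n : ℤ) ∣ discr K}.Finite :=
    ((discr K).natAbs.divisors.finite_toSet).subset fun n hn => by
      have := Int.natCast_dvd.1 hn
      simpa [discr_ne_zero] using this
  refine (hfin.preimage' (f := residueChar) fun n _ => ?_)
  exact Set.finite_coe_iff.1 (finite_fiber n)

/-! ### Splitting in the Galois case -/

variable [IsGalois ℚ K]

/-- The fundamental identity `g * e * f = [K : ℚ]` at `p`. -/
lemma card_mul {p : ℕ} (hp : p.Prime) :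
    Nat.card {v : HeightOneSpectrum (𝓞 K) // residueChar v = p} *
      (Ideal.ramificationIdxIn (Ideal.span {(p : ℤ)}) (𝓞 K) *
       Ideal.inertiaDegIn (Ideal.span {(p : ℤ)}) (𝓞 K)) = Module.finrank ℚ K := by
  have : (Ideal.span {(p : ℤ)}).IsPrime := by
    rw [Ideal.span_singleton_prime (by exact_mod_cast hp.ne_zero)]
    exact Nat.prime_iff_prime_int.mp hp
  rw [card_fiber hp, Ideal.ncard_primesOver_mul_ramificationIdxIn_mul_inertiaDegIn _ _ Gal(K/ℚ)]
  exact IsGalois.card_aut_eq_finrank ℚ K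

lemma card_fiber_le (p : ℕ) :
    Nat.card {v : HeightOneSpectrum (𝓞 K) // residueChar v = p} ≤ Module.finrank ℚ K := by
  by_cases hp : p.Prime
  · exact Nat.le_of_dvd Module.finrank_pos ⟨_, (card_mul hp).symm⟩
  · have : IsEmpty {v : HeightOneSpectrum (𝓞 K) // residueChar v = p} :=
      ⟨fun v => hp (v.2 ▸ residueChar_prime v.1)⟩
    simp

/-- For `p` split, unramifiedness gives `e = 1` and the norm condition gives `f = 1`, hence `g = N`. -/
lemma card_fiber_of_split {p : ℕ} (h : p ∈ splitPrimes K) :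
    Nat.card {v : HeightOneSpectrum (𝓞 K) // residueChar v = p} = Module.finrank ℚ K := by
  have hm := card_mul (K := K) h.1
  have hne : Nat.card {v : HeightOneSpectrum (𝓞 K) // residueChar v = p} ≠ 0 := by
    intro h0
    rw [h0, zero_mul] at hm
    exact Module.finrank_pos.ne hm
  obtain ⟨⟨v, rfl⟩⟩ := (Nat.card_ne_zero.1 hne).1
  have hp := h.1
  have := liesOver_residueChar v
  have := v.isPrime
  have hf : v.asIdeal.inertiaDeg ℤ = 1 := by
    have h1 := residueChar_pow_inertiaDeg v
    rw [absNorm_eq_of_split h] at h1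
    exact Nat.pow_right_injective hp.two_le (h1.trans (pow_one _).symm)
  have he : v.asIdeal.ramificationIdx ℤ = 1 := by
    have := (not_dvd_discr_iff_forall_liesOver K (𝓞 K) (Nat.prime_iff_prime_int.mp hp)).1
      h.2.1 v.asIdeal v.isMaximal (liesOver_residueChar v)
    exact Ideal.ramificationIdx_eq_one ..
  rw [Ideal.ramificationIdxIn_eq_ramificationIdx _ v.asIdeal Gal(K/ℚ),
    Ideal.inertiaDegIn_eq_inertiaDeg _ v.asIdeal Gal(K/ℚ), he, hf] at hm
  simpa using hm

/-- The Galois group permutes the primes above `p` transitively, so if `p` is unramified and does not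
split completely then every prime above it has residue degree at least two. -/
lemma sq_le_absNorm {v : HeightOneSpectrum (𝓞 K)} (h : residueChar v ∉ splitPrimes K)
    (hd : ¬ (residueChar v : ℤ) ∣ discr K) :
    residueChar v ^ 2 ≤ Ideal.absNorm v.asIdeal := by
  have hp := residueChar_prime v
  rw [← residueChar_pow_inertiaDeg v]
  refine Nat.pow_le_pow_right hp.pos ?_
  by_contra! hlt
  have := liesOver_residueChar v
  have := v.isPrime
  have hf : v.asIdeal.inertiaDeg ℤ = 1 := by
    have := Ideal.inertiaDeg_pos v.asIdeal ℤ
    omega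
  refine h ⟨hp, hd, fun P hP hmem => ?_⟩
  have hP' : P.LiesOver (Ideal.span {(residueChar v : ℤ)}) :=
    (Ideal.liesOver_span_iff hP.ne_top (Nat.prime_iff_prime_int.mp hp)).2 (by simpa using hmem)
  rw [← Ideal.pow_inertiaDeg (residueChar v) P, Ideal.inertiaDeg_eq_of_isGaloisGroup
    (Ideal.span {(residueChar v : ℤ)}) P v.asIdeal Gal(K/ℚ), hf, pow_one]

lemma summable_residueChar :
    Summable (fun v : HeightOneSpectrum (𝓞 K) => ((residueChar v : ℝ) ^ 2)⁻¹) := by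
  let e := Equiv.sigmaFiberEquiv (fun v : HeightOneSpectrum (𝓞 K) => residueChar v)
  rw [← e.summable_iff]
  have he : ∀ x, ((residueChar (e x) : ℝ) ^ 2)⁻¹ = ((x.1 : ℝ) ^ 2)⁻¹ := by
    rintro ⟨n, v, rfl⟩
    rfl
  refine Summable.congr ?_ (fun x => (he x).symm)
  rw [summable_sigma_of_nonneg (fun _ => by positivity)]
  refine ⟨fun n => have := finite_fiber (K := K) n; Summable.of_finite, ?_⟩
  refine Summable.of_nonneg_of_le (fun n => by positivity) (fun n => ?_)
    ((Real.summable_nat_pow_inv.2 one_lt_two).mul_left (Module.finrank ℚ K : ℝ))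
  change ∑' _v : {v : HeightOneSpectrum (𝓞 K) // residueChar v = n}, ((n : ℝ) ^ 2)⁻¹ ≤ _
  rw [tsum_const, nsmul_eq_mul]
  gcongr
  exact card_fiber_le n

/-- Outside the split primes, all but finitely many `v` have `N(v) ≥ p²`, with at most `N` of them above
each `p`. This series dominates `eulerLog s v` for `s ≥ 1`. -/
lemma summable_nonsplit :
    Summable (fun v : {v : HeightOneSpectrum (𝓞 K) | residueChar v ∉ splitPrimes K} =>
      2 * (Ideal.absNorm v.1.asIdeal : ℝ)⁻¹) := by
  refine Summable.mul_left _ ?_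
  have hfin : Summable (fun v : HeightOneSpectrum (𝓞 K) =>
      Set.indicator {v | (residueChar v : ℤ) ∣ discr K}
        (fun v => (Ideal.absNorm v.asIdeal : ℝ)⁻¹) v) :=
    summable_of_hasFiniteSupport (finite_ramified.subset Set.support_indicator_subset)
  refine Summable.of_nonneg_of_le (fun v => by positivity) (fun v => ?_)
    ((hfin.add summable_residueChar).subtype _)
  obtain ⟨v, hv⟩ := v
  simp only [Function.comp_apply]
  by_cases hd : (residueChar v : ℤ) ∣ discr K
  · rw [Set.indicator_of_mem (by exact hd)]
    have : 0 ≤ ((residueChar v : ℝ) ^ 2)⁻¹ := by positivity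
    linarith
  · rw [Set.indicator_of_notMem (by exact hd), zero_add]
    have hp := (residueChar_prime v).pos
    have hp' : (0 : ℝ) < residueChar v := by exact_mod_cast hp
    refine inv_anti₀ (by positivity) ?_
    exact_mod_cast sq_le_absNorm hv hd

lemma tendsto_nonsplit :
    Tendsto (fun s : ℝ => ∑' v : {v : HeightOneSpectrum (𝓞 K) | residueChar v ∉ splitPrimes K},
      eulerLog s v.1) (𝓝[>] 1)
      (𝓝 (∑' v : {v : HeightOneSpectrum (𝓞 K) | residueChar v ∉ splitPrimes K},
        eulerLog 1 v.1)) := by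
  refine tendsto_tsum_of_dominated_convergence summable_nonsplit (fun v => ?_) ?_
  · refine tendsto_nhdsWithin_of_tendsto_nhds (ContinuousAt.tendsto ?_)
    unfold eulerLog
    have h2 := absNorm_two_le v.1
    have hne : 1 - (Ideal.absNorm v.1.asIdeal : ℝ) ^ (-(1 : ℝ)) ≠ 0 := by
      have := absNorm_rpow_le_half le_rfl v.1
      linarith
    refine ContinuousAt.neg (ContinuousAt.log ?_ hne)
    refine continuousAt_const.sub (ContinuousAt.rpow continuousAt_const continuousAt_neg
      (Or.inl (by linarith)))
  · filter_upwards [self_mem_nhdsWithin] with s hs v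
    exact norm_eulerLog_le (le_of_lt hs) v.1

/-- Grouping the Euler factors of the primes above split `p`: there are `N` of them, all equal to
`(1 - p^(-s))⁻¹`. -/
lemma hasProd_split {s X : ℝ} (hs1 : 1 < s)
    (h : HasSum (fun v : {v : HeightOneSpectrum (𝓞 K) | residueChar v ∈ splitPrimes K} =>
      eulerLog s v.1) X) :
    HasProd (fun p : splitPrimes K => ((1 - ((p : ℕ) : ℝ) ^ (-s))⁻¹) ^ Module.finrank ℚ K)
      (Real.exp X) := by
  have hsum : HasSum (fun p : splitPrimes K =>
      (Module.finrank ℚ K : ℝ) * -Real.log (1 - ((p : ℕ) : ℝ) ^ (-s))) X := by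
    refine (hasSum_subtype_iff_indicator (s := splitPrimes K)
      (f := fun p : ℕ => (Module.finrank ℚ K : ℝ) * -Real.log (1 - (p : ℝ) ^ (-s)))).2 ?_
    have h' := (hasSum_subtype_iff_indicator (f := eulerLog (K := K) s)).1 h
    let e := Equiv.sigmaFiberEquiv (fun v : HeightOneSpectrum (𝓞 K) => residueChar v)
    rw [← e.hasSum_iff] at h'
    refine h'.sigma fun n => ?_
    have := finite_fiber (K := K) n
    have hval : ∀ v : {v : HeightOneSpectrum (𝓞 K) // residueChar v = n},
        (Set.indicator {v : HeightOneSpectrum (𝓞 K) | residueChar v ∈ splitPrimes K}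
          (eulerLog s) ∘ e) ⟨n, v⟩ =
        Set.indicator (splitPrimes K) (fun p : ℕ => -Real.log (1 - (p : ℝ) ^ (-s))) n := by
      rintro ⟨v, rfl⟩
      change Set.indicator {v : HeightOneSpectrum (𝓞 K) | residueChar v ∈ splitPrimes K}
          (eulerLog s) v = _
      by_cases hv : residueChar v ∈ splitPrimes K
      · rw [Set.indicator_of_mem (by exact hv), Set.indicator_of_mem hv, eulerLog,
          absNorm_eq_of_split hv]
      · rw [Set.indicator_of_notMem (by exact hv), Set.indicator_of_notMem hv]
    simp only [hval]
    have hc : HasSum (fun _ : {v : HeightOneSpectrum (𝓞 K) // residueChar v = n} =>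
        Set.indicator (splitPrimes K) (fun p : ℕ => -Real.log (1 - (p : ℝ) ^ (-s))) n) _ :=
      Summable.of_finite.hasSum
    rw [tsum_const, nsmul_eq_mul] at hc
    convert hc using 1
    by_cases hn : n ∈ splitPrimes K
    · rw [Set.indicator_of_mem hn, Set.indicator_of_mem hn, card_fiber_of_split hn]
    · rw [Set.indicator_of_notMem hn, Set.indicator_of_notMem hn, mul_zero]
  convert hsum.rexp using 2 with p
  have hp : (2 : ℝ) ≤ (p : ℕ) := by exact_mod_cast p.2.1.two_le
  have hlt : ((p : ℕ) : ℝ) ^ (-s) < 1 :=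
    Real.rpow_lt_one_of_one_lt_of_neg (by linarith) (by linarith)
  rw [Function.comp_apply, Real.exp_nat_mul, Real.exp_neg, Real.exp_log (by linarith)]

end

/-- For a Galois number field `K/ℚ` of degree `N ≥ 2` and `Π₁` the set of unramified
primes splitting completely in `K`, `(s−1)·∏_{p∈Π₁}(1−p^{−s})^{−N}` tends to a positive
constant as `s → 1⁺`. -/
theorem stmt_11 (K : Type) [Field K] [NumberField K] [IsGalois ℚ K]
    (N : ℕ) (hN : 2 ≤ N) (hdeg : Module.finrank ℚ K = N) :
    ∃ c : ℝ, 0 < c ∧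
      Filter.Tendsto (fun s : ℝ => (s - 1) *
          ∏' p : {p : ℕ // p.Prime ∧ ¬ (p : ℤ) ∣ NumberField.discr K ∧
              ∀ P : Ideal (𝓞 K), P.IsPrime → ((p : ℕ) : 𝓞 K) ∈ P → Ideal.absNorm P = (p : ℕ)},
            ((1 - ((p : ℕ) : ℝ) ^ (-s))⁻¹) ^ N)
        (nhdsWithin 1 (Set.Ioi 1)) (nhds c) := by
  subst hdeg
  refine ⟨dedekindZeta_residue K * Real.exp (-∑' v : {v : HeightOneSpectrum (𝓞 K) |
    residueChar v ∉ splitPrimes K}, eulerLog 1 v.1),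
    mul_pos (dedekindZeta_residue_pos K) (Real.exp_pos _), ?_⟩
  have hzeta : Tendsto (fun s : ℝ => (s - 1) * ∑' I : Ideal (𝓞 K), (Ideal.absNorm I : ℝ) ^ (-s))
      (𝓝[>] 1) (𝓝 (dedekindZeta_residue K)) := by
    have hre := (Complex.continuous_re.tendsto _).comp
      (tendsto_sub_one_mul_dedekindZeta_nhdsGT K)
    rw [Complex.ofReal_re] at hre
    refine hre.congr' ?_
    filter_upwards [eventually_summable (K := K)] with s hs
    rw [Function.comp_apply, hs.2]
    exact_mod_cast Complex.ofReal_re _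
  refine (hzeta.mul (Real.continuous_exp.continuousAt.tendsto.comp
    (tendsto_nonsplit (K := K)).neg)).congr' ?_
  filter_upwards [eventually_summable (K := K), self_mem_nhdsWithin] with s hs hs1
  have hall := hasSum_eulerLog hs1 hs.1
  have hsplit := (hall.summable.subtype
    {v : HeightOneSpectrum (𝓞 K) | residueChar v ∈ splitPrimes K}).hasSum
  have hadd := hall.summable.tsum_subtype_add_tsum_subtype_compl
    {v : HeightOneSpectrum (𝓞 K) | residueChar v ∈ splitPrimes K}
  rw [hall.tsum_eq] at hadd
  have hprod := (hasProd_split hs1 hsplit).tprod_eq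
  refine Eq.trans ?_ (congrArg (fun x => (s - 1) * x) hprod.symm)
  rw [mul_assoc, Function.comp_apply]
  congr 1
  rw [← Real.exp_log (zeta_pos hs.1), ← hadd, ← Real.exp_add, add_assoc]
  congr 1
  exact add_eq_left.2 (add_neg_cancel _)
end

section
/- Let K be a number field that is a Galois extension of ℚ of degree N ≥ 2, let M ≥ 2 be an integer, and let Π_∪ be the set of rational primes p not dividing the discriminant of K whose residue degree in K is strictly greater than 1. Then there exists a constant A > 0 such that (s−1)^{M(1−1/N)} · ∏_{p∈Π_∪} (1 + M·p^{−s}) → A as s → 1⁺ (s real). -/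
/-!
Write `F(s)` for the product over the unramified primes of residue degree `> 1`, and let `ζ_K` be the
Dedekind zeta function of `K`, with Dirichlet coefficients `a(n)`, the number of ideals of norm `n`.

The function `a` is multiplicative (`idealCount_mul`) and satisfies `a(p^e) ≤ (e + 1)^N`
(`idealCount_prime_pow_le`), so `ζ_K` is an Euler product over the rational primes whose factor at
`p` is `1 + a(p) p^{-s} + O(p^{-2s})`. As `K` is Galois, an unramified `p` has `a(p) = 0` if its
residue degree is `> 1` (`idealCount_prime_nonsplit`) and `a(p) = N` otherwise
(`idealCount_prime_split`). Hence in `F(s) ζ(s)^{-M} ζ_K(s)^{M/N}` the terms of order `p^{-s}` cancel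
at every unramified prime, and the logarithm of this function is a sum over primes which is
dominated, uniformly in `s ≥ 1`, by a convergent series. It therefore has a finite limit as
`s → 1⁺`. Since `(s - 1) ζ(s) → 1` and `(s - 1) ζ_K(s)` tends to a positive limit by the class number
formula, `(s - 1)^{M - M/N} F(s)` has a positive limit (`tendsto_mul_tprod`).
-/

open NumberField Filter

/-! ### Ideals of given norm -/

/-- The number of integral ideals of `𝓞 K` of absolute norm `n`. -/
noncomputable def idealCount (K : Type) [Field K] [NumberField K] (n : ℕ) : ℕ :=
  Nat.card {I : Ideal (𝓞 K) // Ideal.absNorm I = n}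

lemma idealCount_one (K : Type) [Field K] [NumberField K] : idealCount K 1 = 1 := by
  simp [idealCount, Ideal.absNorm_eq_one_iff]

lemma absNorm_dvd_of_natCast_mem (K : Type) [Field K] [NumberField K]
    {I : Ideal (𝓞 K)} {m : ℕ} (h : (m : 𝓞 K) ∈ I) :
    Ideal.absNorm I ∣ m ^ Module.finrank ℤ (𝓞 K) := by
  have := Ideal.absNorm_dvd_absNorm_of_le ((Ideal.span_singleton_le_iff_mem I).mpr h)
  have hn : Algebra.norm ℤ (m : 𝓞 K) = (m : ℤ) ^ Module.finrank ℤ (𝓞 K) := by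
    simpa using Algebra.norm_algebraMap (S := 𝓞 K) (m : ℤ)
  simpa [Ideal.absNorm_span_singleton, hn, Int.natAbs_pow] using this

lemma isCoprime_natCast (K : Type) [Field K] {m n : ℕ} (h : m.Coprime n) :
    IsCoprime (m : 𝓞 K) (n : 𝓞 K) := by
  have := (Nat.isCoprime_iff_coprime.mpr h).map (Int.castRingHom (𝓞 K))
  simpa using this

/-- The map `(I, J) ↦ I * J` is a bijection onto the ideals of norm `m * n`, with inverse
`L ↦ (L + (m), L + (n))`. -/
lemma idealCount_mul (K : Type) [Field K] [NumberField K]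
    {m n : ℕ} (h : m.Coprime n) :
    idealCount K (m * n) = idealCount K m * idealCount K n := by
  unfold idealCount
  rw [← Nat.card_prod]
  symm
  refine Nat.card_eq_of_bijective (fun x => ⟨x.1.1 * x.2.1, by rw [map_mul, x.1.2, x.2.2]⟩) ⟨?_, ?_⟩
  · have key : ∀ {a b : ℕ}, a.Coprime b → ∀ {I J : Ideal (𝓞 K)}, Ideal.absNorm I = a →
        Ideal.absNorm J = b → I = I * J ⊔ Ideal.span {(a : 𝓞 K)} := by
      intro a b hab I J hI hJ
      have ha : (a : 𝓞 K) ∈ I := hI ▸ Ideal.absNorm_mem I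
      have hb : (b : 𝓞 K) ∈ J := hJ ▸ Ideal.absNorm_mem J
      apply le_antisymm
      · have htop : J ⊔ Ideal.span {(a : 𝓞 K)} = ⊤ := by
          obtain ⟨u, v, huv⟩ := isCoprime_natCast K hab
          rw [Ideal.eq_top_iff_one, ← huv, add_comm]
          exact Submodule.add_mem_sup (Ideal.mul_mem_left _ _ hb)
            (Ideal.mul_mem_left _ _ (Ideal.mem_span_singleton_self _))
        calc I = I * (J ⊔ Ideal.span {(a : 𝓞 K)}) := by rw [htop, Ideal.mul_top]
          _ = I * J ⊔ I * Ideal.span {(a : 𝓞 K)} := Ideal.mul_sup _ _ _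
          _ ≤ _ := sup_le_sup_left Ideal.mul_le_right _
      · exact sup_le Ideal.mul_le_left ((Ideal.span_singleton_le_iff_mem _).mpr ha)
    rintro ⟨⟨I, hI⟩, ⟨J, hJ⟩⟩ ⟨⟨I', hI'⟩, ⟨J', hJ'⟩⟩ heq
    have heq : I * J = I' * J' := congrArg Subtype.val heq
    have e1 : I = I' := by rw [key h hI hJ, key h hI' hJ', heq]
    have e2 : J = J' := by
      rw [key h.symm hJ hI, key h.symm hJ' hI', mul_comm, heq, mul_comm]
    subst e1 e2; rfl
  · rintro ⟨L, hL⟩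
    set I := L ⊔ Ideal.span {(m : 𝓞 K)} with hI
    set J := L ⊔ Ideal.span {(n : 𝓞 K)} with hJ
    have hmn : (m : 𝓞 K) * n ∈ L := by
      have := Ideal.absNorm_mem L
      rw [hL] at this; exact_mod_cast this
    have hIJ : I * J = L := by
      apply le_antisymm
      · rw [hI, hJ, Ideal.sup_mul, Ideal.mul_sup, Ideal.mul_sup,
          Ideal.span_singleton_mul_span_singleton]
        exact sup_le (sup_le Ideal.mul_le_left Ideal.mul_le_left)
          (sup_le Ideal.mul_le_right ((Ideal.span_singleton_le_iff_mem _).mpr hmn))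
      · intro x hx
        obtain ⟨u, v, huv⟩ := isCoprime_natCast K h
        have : x = u * (m * x) + v * (x * n) := by
          linear_combination (-x) * huv
        rw [this]
        refine add_mem (Ideal.mul_mem_left _ _ (Ideal.mul_mem_mul ?_ ?_))
          (Ideal.mul_mem_left _ _ (Ideal.mul_mem_mul ?_ ?_))
        · exact Ideal.mem_sup_right (Ideal.mem_span_singleton_self _)
        · exact Ideal.mem_sup_left hx
        · exact Ideal.mem_sup_left hx
        · exact Ideal.mem_sup_right (Ideal.mem_span_singleton_self _)
    have hprod : Ideal.absNorm I * Ideal.absNorm J = m * n := by rw [← map_mul, hIJ, hL]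
    have h1 : (Ideal.absNorm I).Coprime n := Nat.Coprime.coprime_dvd_left
      (absNorm_dvd_of_natCast_mem K (Ideal.mem_sup_right (Ideal.mem_span_singleton_self _)))
      (h.pow_left _)
    have h2 : (Ideal.absNorm J).Coprime m := Nat.Coprime.coprime_dvd_left
      (absNorm_dvd_of_natCast_mem K (Ideal.mem_sup_right (Ideal.mem_span_singleton_self _)))
      (h.symm.pow_left _)
    have e1 : Ideal.absNorm I = m := Nat.dvd_antisymm
      (h1.dvd_of_dvd_mul_right (hprod ▸ dvd_mul_right _ _))
      (h2.symm.dvd_of_dvd_mul_right (hprod ▸ dvd_mul_right _ _))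
    have e2 : Ideal.absNorm J = n := Nat.dvd_antisymm
      (h2.dvd_of_dvd_mul_left (hprod ▸ dvd_mul_left _ _))
      (h1.symm.dvd_of_dvd_mul_left (hprod ▸ dvd_mul_left _ _))
    exact ⟨⟨⟨I, e1⟩, ⟨J, e2⟩⟩, Subtype.ext hIJ⟩

lemma mem_primesOver_iff (K : Type) [Field K] {p : ℕ} (hp : p.Prime) {P : Ideal (𝓞 K)} :
    P ∈ (Ideal.span {(p : ℤ)}).primesOver (𝓞 K) ↔ P.IsPrime ∧ (p : 𝓞 K) ∈ P := by
  refine and_congr_right fun h => ?_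
  rw [Ideal.liesOver_span_iff h.ne_top (Nat.prime_iff_prime_int.mp hp)]
  simp

/-- The identity `g e f = [K : ℚ]` for the primes above `p`. -/
lemma fundamental_identity (K : Type) [Field K] [NumberField K] [IsGalois ℚ K]
    {p : ℕ} (hp : p.Prime) :
    ((Ideal.span {(p : ℤ)}).primesOver (𝓞 K)).ncard *
      ((Ideal.span {(p : ℤ)}).ramificationIdxIn (𝓞 K) *
        (Ideal.span {(p : ℤ)}).inertiaDegIn (𝓞 K)) = Module.finrank ℚ K := by
  have : (Ideal.span {(p : ℤ)}).IsPrime := by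
    rw [Ideal.span_singleton_prime (by exact_mod_cast hp.ne_zero)]
    exact Nat.prime_iff_prime_int.mp hp
  rw [Ideal.ncard_primesOver_mul_ramificationIdxIn_mul_inertiaDegIn _ (𝓞 K) Gal(K/ℚ),
    IsGalois.card_aut_eq_finrank]

lemma absNorm_of_prime_mem (K : Type) [Field K] [NumberField K] [IsGalois ℚ K]
    {p : ℕ} (hp : p.Prime) {P : Ideal (𝓞 K)} (hP : P.IsPrime)
    (h : (p : 𝓞 K) ∈ P) :
    Ideal.absNorm P = p ^ (Ideal.span {(p : ℤ)}).inertiaDegIn (𝓞 K) := by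
  have h1 : P ∈ (Ideal.span {(p : ℤ)}).primesOver (𝓞 K) := (mem_primesOver_iff K hp).mpr ⟨hP, h⟩
  have := h1.2
  rw [Ideal.inertiaDegIn_eq_inertiaDeg (Ideal.span {(p : ℤ)}) P Gal(K/ℚ)]
  have := Ideal.natAbs_pow_inertiaDeg (p : ℤ) P
  simpa using this.symm

/-- An ideal of norm `p` would be a prime above `p` of residue degree one. -/
lemma idealCount_prime_nonsplit (K : Type) [Field K] [NumberField K]
    {p : ℕ} (hp : p.Prime)
    (h : ∃ r : ℕ, 1 < r ∧ ∀ P : Ideal (𝓞 K), P.IsPrime → ((p : ℕ) : 𝓞 K) ∈ P →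
                Ideal.absNorm P = (p : ℕ) ^ r) : idealCount K p = 0 := by
  obtain ⟨r, hr, h⟩ := h
  rw [idealCount, Nat.card_eq_zero]
  left
  constructor
  rintro ⟨I, hI⟩
  have h1 := h I (Ideal.isPrime_of_irreducible_absNorm (hI ▸ hp)) (hI ▸ Ideal.absNorm_mem I)
  rw [hI] at h1
  have := Nat.pow_right_injective hp.two_le (a₁ := 1) (a₂ := r) (by simpa using h1)
  omega

/-- An unramified prime which does not have residue degree `> 1` splits completely, and the
ideals of norm `p` are then exactly the `[K : ℚ]` primes above `p`. -/
lemma idealCount_prime_split (K : Type) [Field K] [NumberField K] [IsGalois ℚ K]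
    {p : ℕ} (hp : p.Prime) (hd : ¬ (p : ℤ) ∣ NumberField.discr K)
    (h : ¬ ∃ r : ℕ, 1 < r ∧ ∀ P : Ideal (𝓞 K), P.IsPrime → ((p : ℕ) : 𝓞 K) ∈ P →
                Ideal.absNorm P = (p : ℕ) ^ r) : idealCount K p = Module.finrank ℚ K := by
  have hpi := Nat.prime_iff_prime_int.mp hp
  have hpp : (Ideal.span {(p : ℤ)}).IsPrime := by
    rwa [Ideal.span_singleton_prime (by exact_mod_cast hp.ne_zero)]
  have hfund := fundamental_identity K hp
  have hpos : 0 < Module.finrank ℚ K := Module.finrank_pos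
  have hf : (Ideal.span {(p : ℤ)}).inertiaDegIn (𝓞 K) = 1 := by
    have h0 : (Ideal.span {(p : ℤ)}).inertiaDegIn (𝓞 K) ≠ 0 := by
      intro h0; rw [h0] at hfund; omega
    by_contra h1
    exact h ⟨_, by omega, fun P hP hm => absNorm_of_prime_mem K hp hP hm⟩
  have he : (Ideal.span {(p : ℤ)}).ramificationIdxIn (𝓞 K) = 1 := by
    have hne : ((Ideal.span {(p : ℤ)}).primesOver (𝓞 K)).Nonempty := by
      rw [Set.nonempty_iff_ne_empty]
      intro h0; rw [h0] at hfund; simp at hfund; omega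
    obtain ⟨P, hP⟩ := hne
    have h1 := hP.1
    have h2 := hP.2
    rw [Ideal.ramificationIdxIn_eq_ramificationIdx (Ideal.span {(p : ℤ)}) P Gal(K/ℚ),
      Ideal.ramificationIdx_eq_one_iff]
    exact (NumberField.not_dvd_discr_iff_forall_mem K (𝓞 K) hpi).mp hd P h1
      (by simpa using ((mem_primesOver_iff K hp).mp hP).2)
  rw [hf, he] at hfund
  rw [← hfund, one_mul, mul_one, idealCount, ← Nat.card_coe_set_eq]
  congr 1
  have : {I : Ideal (𝓞 K) | Ideal.absNorm I = p} = (Ideal.span {(p : ℤ)}).primesOver (𝓞 K) := by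
    ext P
    rw [mem_primesOver_iff K hp]
    constructor
    · intro hP
      have hP : Ideal.absNorm P = p := hP
      exact ⟨Ideal.isPrime_of_irreducible_absNorm (hP ▸ hp), hP ▸ Ideal.absNorm_mem P⟩
    · rintro ⟨h1, h2⟩
      have := absNorm_of_prime_mem K hp h1 h2
      rwa [hf, pow_one] at this
  rw [← this]; rfl

open UniqueFactorizationMonoid in
/-- An ideal of norm `p ^ e` is determined by its exponents at the at most `[K : ℚ]` primes above
`p`, and each exponent is at most `e`. -/
lemma idealCount_prime_pow_le (K : Type) [Field K] [NumberField K] [IsGalois ℚ K]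
    {p : ℕ} (hp : p.Prime) (e : ℕ) :
    idealCount K (p ^ e) ≤ (e + 1) ^ Module.finrank ℚ K := by
  classical
  set S := (Ideal.span {(p : ℤ)}).primesOver (𝓞 K) with hS
  have hfund := fundamental_identity K hp
  have hpos : 0 < Module.finrank ℚ K := Module.finrank_pos
  have hcard : S.ncard ≤ Module.finrank ℚ K := by
    exact Nat.le_of_dvd hpos (Dvd.intro _ hfund)
  have hfin : S.Finite := Set.finite_of_ncard_ne_zero (by
    intro h0; rw [← hS, h0] at hfund; omega)
  have : Fintype S := hfin.fintype
  have hfac : ∀ {I : Ideal (𝓞 K)}, Ideal.absNorm I = p ^ e → ∀ P ∈ normalizedFactors I,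
      P ∈ S := by
    intro I hI P hP
    have hPp := prime_of_normalized_factor P hP
    have hPP := Ideal.isPrime_of_prime hPp
    refine (mem_primesOver_iff K hp).mpr ⟨hPP, ?_⟩
    have h1 : I ≤ P := Ideal.le_of_dvd (dvd_of_mem_normalizedFactors hP)
    have h2 := h1 (Ideal.absNorm_mem I)
    rw [hI, Nat.cast_pow] at h2
    exact hPP.mem_of_pow_mem _ h2
  have hne : ∀ {I : Ideal (𝓞 K)}, Ideal.absNorm I = p ^ e → I ≠ ⊥ := by
    rintro I hI rfl
    rw [Ideal.absNorm_bot] at hI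
    exact (pow_ne_zero _ hp.ne_zero) hI.symm
  have hcount : ∀ {I : Ideal (𝓞 K)}, Ideal.absNorm I = p ^ e → ∀ P ∈ S,
      (normalizedFactors I).count P < e + 1 := by
    intro I hI P hP
    obtain ⟨hPP, hm⟩ := (mem_primesOver_iff K hp).mp hP
    have h1 : P ^ (normalizedFactors I).count P ∣ I := by
      rw [← Multiset.prod_replicate]
      conv_rhs => rw [← Ideal.prod_normalizedFactors_eq_self (hne hI)]
      exact Multiset.prod_dvd_prod_of_le (Multiset.le_count_iff_replicate_le.mp le_rfl)
    have h2 := Ideal.absNorm_dvd_absNorm_of_le (Ideal.le_of_dvd h1)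
    have h0 : (Ideal.span {(p : ℤ)}).inertiaDegIn (𝓞 K) ≠ 0 := by
      intro h0; rw [h0] at hfund; omega
    rw [map_pow, hI, absNorm_of_prime_mem K hp hPP hm, ← pow_mul,
      Nat.pow_dvd_pow_iff_le_right hp.one_lt] at h2
    nlinarith [Nat.pos_of_ne_zero h0]
  let φ : {I : Ideal (𝓞 K) // Ideal.absNorm I = p ^ e} → (S → Fin (e + 1)) :=
    fun I P => ⟨(normalizedFactors I.1).count P.1, hcount I.2 P.1 P.2⟩
  have hφ : Function.Injective φ := by
    rintro ⟨I, hI⟩ ⟨J, hJ⟩ hIJ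
    apply Subtype.ext
    change I = J
    rw [← Ideal.prod_normalizedFactors_eq_self (hne hI),
      ← Ideal.prod_normalizedFactors_eq_self (hne hJ)]
    congr 1
    ext P
    by_cases hP : P ∈ S
    · exact congrArg Fin.val (congrFun hIJ ⟨P, hP⟩)
    · rw [Multiset.count_eq_zero_of_notMem fun h => hP (hfac hI P h),
        Multiset.count_eq_zero_of_notMem fun h => hP (hfac hJ P h)]
  calc idealCount K (p ^ e) ≤ Nat.card (S → Fin (e + 1)) := Nat.card_le_card_of_injective φ hφ
    _ = (e + 1) ^ S.ncard := by
      rw [Nat.card_fun, Nat.card_eq_fintype_card, Fintype.card_fin, Nat.card_coe_set_eq]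
    _ ≤ _ := Nat.pow_le_pow_right (by omega) hcard

/-! ### Power series of the local factors -/

lemma summable_shifted_pow_geometric (N k : ℕ) :
    Summable fun e : ℕ => ((e + k : ℕ) : ℝ) ^ N * (1 / 2 : ℝ) ^ e := by
  have h := summable_pow_mul_geometric_of_norm_lt_one N (r := (1 / 2 : ℝ))
    (by rw [Real.norm_eq_abs, abs_of_pos] <;> norm_num)
  have h2 := ((summable_nat_add_iff k).mpr h).mul_left ((2 : ℝ) ^ k)
  refine h2.congr fun e => ?_
  rw [pow_add]
  have : (2 : ℝ) ^ k * (1 / 2 : ℝ) ^ k = 1 := by rw [← mul_pow]; norm_num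
  linear_combination (((e + k : ℕ) : ℝ) ^ N * (1 / 2 : ℝ) ^ e) * this

lemma abs_log_one_add_sub_le {u : ℝ} (hu : 0 ≤ u) : |Real.log (1 + u) - u| ≤ u ^ 2 := by
  have h1 : Real.log (1 + u) ≤ u := by
    have := Real.log_le_sub_one_of_pos (show 0 < 1 + u by linarith)
    linarith
  have h2 : 1 - (1 + u)⁻¹ ≤ Real.log (1 + u) := Real.one_sub_inv_le_log_of_pos (by linarith)
  have h3 : u - u ^ 2 ≤ 1 - (1 + u)⁻¹ := by
    have : 1 - (1 + u)⁻¹ = u / (1 + u) := by field_simp; ring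
    rw [this, le_div_iff₀ (by linarith)]
    nlinarith [pow_nonneg hu 3]
  rw [abs_le]; constructor <;> nlinarith

lemma abs_log_one_sub_add_le {x : ℝ} (h0 : 0 ≤ x) (h1 : x ≤ 1 / 2) :
    |Real.log (1 - x) + x| ≤ 2 * x ^ 2 := by
  have h := Real.abs_log_sub_add_sum_range_le (x := x) (by rw [abs_of_nonneg h0]; linarith) 1
  simp only [Finset.range_one, Finset.sum_singleton, abs_of_nonneg h0] at h
  norm_num at h
  rw [add_comm]
  refine h.trans ?_
  rw [div_le_iff₀ (by linarith)]
  nlinarith [sq_nonneg x]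

/-- The constant `∑ (e + 3)^N 2^{-e}`, which bounds `x⁻² ∑_{e ≥ 2} (e + 1)^N x^e` for
`0 < x ≤ 1/2`. -/
noncomputable def tailConst (N : ℕ) : ℝ := ∑' e : ℕ, ((e + 3 : ℕ) : ℝ) ^ N * (1 / 2 : ℝ) ^ e

lemma tailConst_nonneg (N : ℕ) : 0 ≤ tailConst N := tsum_nonneg fun _ => by positivity

/-- The power series of a local factor, with coefficients `b e`. -/
noncomputable def localSeries (b : ℕ → ℕ) (x : ℝ) : ℝ := ∑' e : ℕ, (b e : ℝ) * x ^ e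

section localfactor
variable {b : ℕ → ℕ} {N : ℕ} (hb : ∀ e, b e ≤ (e + 1) ^ N)
include hb

lemma local_term_le {x : ℝ} (h0 : 0 ≤ x) (h1 : x ≤ 1 / 2) (e : ℕ) :
    (b e : ℝ) * x ^ e ≤ ((e + 1 : ℕ) : ℝ) ^ N * (1 / 2 : ℝ) ^ e := by
  have : (b e : ℝ) ≤ ((e + 1 : ℕ) : ℝ) ^ N := by exact_mod_cast hb e
  gcongr

lemma local_summable {x : ℝ} (h0 : 0 ≤ x) (h1 : x ≤ 1 / 2) :
    Summable fun e : ℕ => (b e : ℝ) * x ^ e :=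
  Summable.of_nonneg_of_le (fun _ => by positivity) (local_term_le hb h0 h1)
    (summable_shifted_pow_geometric N 1)

lemma localSeries_continuousOn : ContinuousOn (localSeries b) (Set.Icc 0 (1 / 2)) := by
  refine continuousOn_tsum (fun e => by fun_prop) (summable_shifted_pow_geometric N 1) ?_
  intro e x hx
  have hx0 : 0 ≤ x := hx.1
  rw [Real.norm_eq_abs, abs_of_nonneg (by positivity)]
  exact local_term_le hb hx.1 hx.2 e

variable (hb0 : b 0 = 1)
include hb0

lemma localSeries_expansion {x : ℝ} (h0 : 0 ≤ x) (h1 : x ≤ 1 / 2) :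
    ∃ R : ℝ, 0 ≤ R ∧ R ≤ tailConst N * x ^ 2 ∧ localSeries b x = 1 + (b 1 * x + R) := by
  have hs := local_summable hb h0 h1
  refine ⟨∑' e : ℕ, (b (e + 2) : ℝ) * x ^ (e + 2), tsum_nonneg fun _ => by positivity, ?_, ?_⟩
  · rw [tailConst, ← tsum_mul_right]
    refine ((summable_nat_add_iff 2).mpr hs).tsum_le_tsum (fun e => ?_)
      ((summable_shifted_pow_geometric N 3).mul_right _)
    have : (b (e + 2) : ℝ) ≤ ((e + 3 : ℕ) : ℝ) ^ N := by exact_mod_cast hb (e + 2)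
    rw [pow_add, ← mul_assoc]
    gcongr
  · rw [localSeries, ← hs.sum_add_tsum_nat_add 2]
    simp [Finset.sum_range_succ, hb0, add_assoc]

lemma one_le_localSeries {x : ℝ} (h0 : 0 ≤ x) (h1 : x ≤ 1 / 2) : 1 ≤ localSeries b x := by
  obtain ⟨R, hR, -, h⟩ := localSeries_expansion hb hb0 h0 h1
  rw [h]
  have : 0 ≤ (b 1 : ℝ) * x := by positivity
  linarith

lemma abs_log_localSeries_sub_le {x : ℝ} (h0 : 0 ≤ x) (h1 : x ≤ 1 / 2) :
    |Real.log (localSeries b x) - b 1 * x| ≤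
      (tailConst N + (2 ^ N + tailConst N) ^ 2) * x ^ 2 := by
  obtain ⟨R, hR, hR', h⟩ := localSeries_expansion hb hb0 h0 h1
  have hC := tailConst_nonneg N
  have hb1 : (b 1 : ℝ) ≤ 2 ^ N := by exact_mod_cast hb 1
  have hu0 : 0 ≤ (b 1 : ℝ) * x + R := by positivity
  have hu : (b 1 : ℝ) * x + R ≤ (2 ^ N + tailConst N) * x := by
    have : (b 1 : ℝ) * x ≤ 2 ^ N * x := by gcongr
    nlinarith [mul_nonneg hC (mul_nonneg h0 (show 0 ≤ 1 - x by linarith))]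
  have hl := abs_log_one_add_sub_le hu0
  have hu2 : ((b 1 : ℝ) * x + R) ^ 2 ≤ ((2 ^ N + tailConst N) * x) ^ 2 := by gcongr
  rw [h]
  rw [abs_le] at hl ⊢
  constructor <;> nlinarith

end localfactor

/-- The logarithm of the local factor at one prime of `F(s) ζ(s)^{-M} ζ_K(s)^{M/N}`, in the
variable `x = p^{-s}`; `b e` is the number of ideals of norm `p^e`, and `i ∈ {0, 1}` records
whether `p` contributes to `F`. -/
noncomputable def localLog (M N : ℕ) (i : ℝ) (b : ℕ → ℕ) (x : ℝ) : ℝ :=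
  i * Real.log (1 + M * x) + M * Real.log (1 - x) + (M / N : ℝ) * Real.log (localSeries b x)

lemma localLog_continuousOn {b : ℕ → ℕ} {N : ℕ} (hb : ∀ e, b e ≤ (e + 1) ^ N) (hb0 : b 0 = 1)
    (M : ℕ) (i : ℝ) : ContinuousOn (localLog M N i b) (Set.Icc 0 (1 / 2)) := by
  unfold localLog
  refine ((continuousOn_const.mul (ContinuousOn.log (by fun_prop) ?_)).add
    (continuousOn_const.mul (ContinuousOn.log (by fun_prop) ?_))).add
    (continuousOn_const.mul (ContinuousOn.log (localSeries_continuousOn hb) ?_))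
  · intro x hx
    have hx0 : 0 ≤ x := hx.1
    positivity
  · intro x hx
    have := hx.2
    linarith
  · intro x hx
    have := one_le_localSeries hb hb0 hx.1 hx.2
    linarith

/-- The constant in the quadratic error term of `localLog`. -/
noncomputable def errConst (M N : ℕ) : ℝ :=
  (M : ℝ) ^ 2 + M * 2 + (M / N : ℝ) * (tailConst N + (2 ^ N + tailConst N) ^ 2)

lemma errConst_nonneg (M N : ℕ) : 0 ≤ errConst M N := by
  have := tailConst_nonneg N
  unfold errConst; positivity

lemma abs_localLog_sub_le {b : ℕ → ℕ} {N : ℕ} (hb : ∀ e, b e ≤ (e + 1) ^ N) (hb0 : b 0 = 1)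
    (M : ℕ) {i : ℝ} (hi0 : 0 ≤ i) (hi1 : i ≤ 1) {x : ℝ} (h0 : 0 ≤ x) (h1 : x ≤ 1 / 2) :
    |localLog M N i b x - (i * M - M + (M / N : ℝ) * b 1) * x| ≤ errConst M N * x ^ 2 := by
  have e1 := abs_log_one_add_sub_le (show 0 ≤ (M : ℝ) * x by positivity)
  have e2 := abs_log_one_sub_add_le h0 h1
  have e3 := abs_log_localSeries_sub_le hb hb0 h0 h1
  have : localLog M N i b x - (i * M - M + (M / N : ℝ) * b 1) * x =
      i * (Real.log (1 + M * x) - M * x) + M * (Real.log (1 - x) + x) +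
        (M / N : ℝ) * (Real.log (localSeries b x) - b 1 * x) := by
    unfold localLog; ring
  rw [this]
  have hMN : (0 : ℝ) ≤ M / N := by positivity
  calc _ ≤ |i * (Real.log (1 + M * x) - M * x)| + |M * (Real.log (1 - x) + x)| +
        |(M / N : ℝ) * (Real.log (localSeries b x) - b 1 * x)| := abs_add_three _ _ _
    _ = i * |Real.log (1 + M * x) - M * x| + M * |Real.log (1 - x) + x| +
        (M / N : ℝ) * |Real.log (localSeries b x) - b 1 * x| := by
      rw [abs_mul, abs_mul, abs_mul, abs_of_nonneg hi0, abs_of_nonneg hMN, Nat.abs_cast]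
    _ ≤ 1 * (M * x) ^ 2 + M * (2 * x ^ 2) +
        (M / N : ℝ) * ((tailConst N + (2 ^ N + tailConst N) ^ 2) * x ^ 2) := by gcongr
    _ = _ := by unfold errConst; ring

/-! ### Euler products and the limit -/

lemma prime_rpow_neg_mem {s : ℝ} (hs : 1 ≤ s) (p : Nat.Primes) :
    ((p : ℕ) : ℝ) ^ (-s) ∈ Set.Icc (0 : ℝ) (1 / 2) := by
  have h2 : (2 : ℝ) ≤ ((p : ℕ) : ℝ) := by exact_mod_cast p.2.two_le
  refine ⟨by positivity, ?_⟩
  calc ((p : ℕ) : ℝ) ^ (-s) ≤ ((p : ℕ) : ℝ) ^ (-1 : ℝ) :=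
        Real.rpow_le_rpow_of_exponent_le (by linarith) (by linarith)
    _ = ((p : ℕ) : ℝ)⁻¹ := Real.rpow_neg_one _
    _ ≤ _ := by rw [one_div]; gcongr

lemma prime_rpow_neg_sq_le {s : ℝ} (hs : 1 ≤ s) (p : Nat.Primes) :
    (((p : ℕ) : ℝ) ^ (-s)) ^ 2 ≤ ((p : ℕ) : ℝ) ^ (-2 : ℝ) := by
  have h2 : (1 : ℝ) ≤ ((p : ℕ) : ℝ) := by exact_mod_cast p.2.one_lt.le
  rw [← Real.rpow_natCast, ← Real.rpow_mul (by positivity)]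
  exact Real.rpow_le_rpow_of_exponent_le h2 (by push_cast; linarith)

lemma summable_primes_rpow_neg {s : ℝ} (hs : 1 < s) :
    Summable fun p : Nat.Primes => ((p : ℕ) : ℝ) ^ (-s) :=
  Nat.Primes.summable_rpow.mpr (by linarith)

section global
variable {a : ℕ → ℕ} {N M : ℕ} {D T : Set ℕ}

lemma natCast_pow_rpow (p e : ℕ) (s : ℝ) :
    ((p ^ e : ℕ) : ℝ) ^ (-s) = (((p : ℕ) : ℝ) ^ (-s)) ^ e := by
  rw [Nat.cast_pow, ← Real.rpow_natCast, ← Real.rpow_natCast, ← Real.rpow_mul (by positivity),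
    ← Real.rpow_mul (by positivity), mul_comm]

/-- Euler product for a Dirichlet series with multiplicative coefficients, in logarithmic form. -/
lemma exp_tsum_log_localSeries (h1 : a 1 = 1) (hmul : ∀ {m n}, m.Coprime n → a (m * n) = a m * a n)
    (hb : ∀ p : Nat.Primes, ∀ e, a (p ^ e) ≤ (e + 1) ^ N) {s : ℝ} (hs : 1 < s)
    (hsum : Summable fun n : ℕ => (a n : ℝ) * (n : ℝ) ^ (-s)) :
    Summable (fun p : Nat.Primes =>
        Real.log (localSeries (fun e => a (p ^ e)) ((p : ℕ) ^ (-s)))) ∧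
      Real.exp (∑' p : Nat.Primes,
        Real.log (localSeries (fun e => a (p ^ e)) ((p : ℕ) ^ (-s)))) =
      ∑' n : ℕ, (a n : ℝ) * (n : ℝ) ^ (-s) := by
  have hx := fun p : Nat.Primes => prime_rpow_neg_mem hs.le p
  have hs1 : Summable (fun p : Nat.Primes =>
        Real.log (localSeries (fun e => a (p ^ e)) ((p : ℕ) ^ (-s)))) := by
    refine Summable.of_norm_bounded ((summable_primes_rpow_neg hs).mul_left
      (2 ^ N + (tailConst N + (2 ^ N + tailConst N) ^ 2))) fun p => ?_
    have e := abs_log_localSeries_sub_le (b := fun e => a (p ^ e)) (hb p) (by simp [h1])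
      (hx p).1 (hx p).2
    set x := ((p : ℕ) : ℝ) ^ (-s)
    obtain ⟨hx0, hx1⟩ := hx p
    have hC := tailConst_nonneg N
    have hb1 : (a (p ^ 1) : ℝ) ≤ 2 ^ N := by exact_mod_cast hb p 1
    have e2 : (a (p ^ 1) : ℝ) * x ≤ 2 ^ N * x := by gcongr
    have e4 : 0 ≤ (a (p ^ 1) : ℝ) * x := by positivity
    have e3 : (tailConst N + (2 ^ N + tailConst N) ^ 2) * x ^ 2 ≤
        (tailConst N + (2 ^ N + tailConst N) ^ 2) * x := by
      gcongr
      nlinarith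
    rw [Real.norm_eq_abs]
    rw [abs_le] at e ⊢
    constructor <;> nlinarith
  refine ⟨hs1, ?_⟩
  rw [Real.rexp_tsum_eq_tprod (fun p => lt_of_lt_of_le one_pos
    (one_le_localSeries (hb p) (by simp [h1]) (hx p).1 (hx p).2)) hs1]
  rw [← EulerProduct.eulerProduct_tprod (f := fun n : ℕ => (a n : ℝ) * (n : ℝ) ^ (-s))
    (by simp [h1]) ?_ ?_ ?_]
  · refine tprod_congr fun p => tsum_congr fun e => ?_
    rw [natCast_pow_rpow]
  · intro m n hmn
    rw [hmul hmn, Nat.cast_mul, Nat.cast_mul, Real.mul_rpow (by positivity) (by positivity)]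
    ring
  · exact hsum.norm
  · simp [Real.zero_rpow (show -s ≠ 0 by linarith)]

/-- Euler product for `ζ`, in logarithmic form. -/
lemma exp_neg_tsum_log_one_sub {s : ℝ} (hs : 1 < s) :
    Summable (fun p : Nat.Primes => Real.log (1 - ((p : ℕ) : ℝ) ^ (-s))) ∧
      Real.exp (-∑' p : Nat.Primes, Real.log (1 - ((p : ℕ) : ℝ) ^ (-s))) =
      ∑' n : ℕ, 1 / (n : ℝ) ^ s := by
  have hx := fun p : Nat.Primes => prime_rpow_neg_mem hs.le p
  have hs1 : Summable (fun p : Nat.Primes => Real.log (1 - ((p : ℕ) : ℝ) ^ (-s))) := by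
    simpa [sub_eq_add_neg] using
      Real.summable_log_one_add_of_summable (summable_primes_rpow_neg hs).neg
  refine ⟨hs1, ?_⟩
  have hs2 : Summable (fun p : Nat.Primes => Real.log (1 - ((p : ℕ) : ℝ) ^ (-s))⁻¹) := by
    simpa using hs1.neg
  have hpos : ∀ p : Nat.Primes, 0 < (1 - ((p : ℕ) : ℝ) ^ (-s))⁻¹ := fun p => by
    have := (hx p).2
    exact inv_pos.mpr (by linarith)
  rw [← tsum_neg]
  simp_rw [← Real.log_inv]
  rw [Real.rexp_tsum_eq_tprod hpos hs2]
  have hf : Summable fun n : ℕ => (n : ℝ) ^ (-s) := Real.summable_nat_rpow.mpr (by linarith)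
  have := EulerProduct.eulerProduct_tprod (f := fun n : ℕ => (n : ℝ) ^ (-s))
    (by simp) (fun {m n} _ => by
      rw [Nat.cast_mul, Real.mul_rpow (by positivity) (by positivity)]) hf.norm
    (by simp [Real.zero_rpow (show -s ≠ 0 by linarith)])
  simp_rw [one_div, ← Real.rpow_neg (Nat.cast_nonneg _)]
  rw [← this]
  refine tprod_congr fun p => ?_
  simp_rw [natCast_pow_rpow]
  rw [tsum_geometric_of_lt_one (hx p).1 (by linarith [(hx p).2])]

open Classical in
/-- The product over `T`, in logarithmic form and as a sum over all primes. -/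
lemma exp_tsum_log_indicator (hT : ∀ p ∈ T, p.Prime) {s : ℝ} (hs : 1 < s) :
    Summable (fun p : Nat.Primes =>
        (if (p : ℕ) ∈ T then (1 : ℝ) else 0) * Real.log (1 + M * ((p : ℕ) : ℝ) ^ (-s))) ∧
      Real.exp (∑' p : Nat.Primes,
        (if (p : ℕ) ∈ T then (1 : ℝ) else 0) * Real.log (1 + M * ((p : ℕ) : ℝ) ^ (-s))) =
      ∏' p : T, (1 + (M : ℝ) * ((p : ℕ) : ℝ) ^ (-s)) := by
  let g : ℕ → ℝ := T.mulIndicator fun p => 1 + (M : ℝ) * ((p : ℕ) : ℝ) ^ (-s)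
  have hg : ∀ p : Nat.Primes, (if (p : ℕ) ∈ T then (1 : ℝ) else 0) *
      Real.log (1 + M * ((p : ℕ) : ℝ) ^ (-s)) = Real.log (g p) := by
    intro p
    by_cases h : (p : ℕ) ∈ T <;> simp [g, h]
  have hgpos : ∀ p : Nat.Primes, 0 < g p := by
    intro p
    by_cases h : (p : ℕ) ∈ T <;> simp only [g, Set.mulIndicator, h, if_true, if_false]
    · positivity
    · exact one_pos
  have hs0 : Summable fun p : Nat.Primes => Real.log (1 + M * ((p : ℕ) : ℝ) ^ (-s)) :=
    Real.summable_log_one_add_of_summable ((summable_primes_rpow_neg hs).mul_left _)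
  have hs1 : Summable fun p : Nat.Primes => Real.log (g p) := by
    refine Summable.of_norm_bounded hs0.norm fun p => ?_
    by_cases h : (p : ℕ) ∈ T <;> simp [g, h]
  simp_rw [hg]
  refine ⟨hs1, ?_⟩
  rw [Real.rexp_tsum_eq_tprod hgpos hs1, tprod_subtype T fun p => 1 + (M : ℝ) * (p : ℝ) ^ (-s)]
  refine tprod_subtype_eq_of_mulSupport_subset (f := g) (s := {p | Nat.Prime p}) ?_
  exact (Set.mulSupport_mulIndicator_subset).trans hT

open Classical in
/-- The analytic core. If `a` is multiplicative with `a (p ^ e) ≤ (e + 1) ^ N`, its Dirichlet series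
behaves like `κ / (s - 1)` at `1⁺`, and `a p = 0` for `p ∈ T` while `a p = N` for every other prime
outside the finite set `D`, then the product over `T` grows like `(s - 1) ^ (-M (1 - 1 / N))`: subtracting the
logarithms of the Euler products of `ζ ^ M` and of the `(-M / N)`-th power of the series leaves a
sum over primes dominated by `∑ p⁻²` up to finitely many terms. -/
theorem tendsto_mul_tprod (h1 : a 1 = 1) (hmul : ∀ {m n}, m.Coprime n → a (m * n) = a m * a n)
    (hb : ∀ p : Nat.Primes, ∀ e, a (p ^ e) ≤ (e + 1) ^ N) (hN : N ≠ 0)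
    (hT : ∀ p ∈ T, p.Prime) (hD : D.Finite)
    (hsplit : ∀ p : Nat.Primes, (p : ℕ) ∉ D → (p : ℕ) ∉ T → a p = N)
    (hnon : ∀ p ∈ T, a p = 0)
    {κ : ℝ} (hκ : 0 < κ)
    (hlim : Tendsto (fun s : ℝ => (s - 1) * ∑' n : ℕ, (a n : ℝ) * (n : ℝ) ^ (-s))
      (nhdsWithin 1 (Set.Ioi 1)) (nhds κ)) :
    ∃ A : ℝ, 0 < A ∧ Tendsto (fun s : ℝ => (s - 1) ^ ((M : ℝ) * (1 - 1 / (N : ℝ))) *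
      ∏' p : T, (1 + (M : ℝ) * ((p : ℕ) : ℝ) ^ (-s))) (nhdsWithin 1 (Set.Ioi 1)) (nhds A) := by
  let i : Nat.Primes → ℝ := fun p => if (p : ℕ) ∈ T then (1 : ℝ) else 0
  -- coefficient of `x = p ^ (-s)` in the logarithm of the combined local factor at `p`
  let c : Nat.Primes → ℝ := fun p => i p * M - M + (M / N : ℝ) * a (p ^ 1)
  let H : ℝ → Nat.Primes → ℝ := fun s p =>
    localLog M N (i p) (fun e => a (p ^ e)) (((p : ℕ) : ℝ) ^ (-s))
  have hi0 : ∀ p, 0 ≤ i p := fun p => by simp only [i]; split_ifs <;> norm_num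
  have hi1 : ∀ p, i p ≤ 1 := fun p => by simp only [i]; split_ifs <;> norm_num
  have hNR : (N : ℝ) ≠ 0 := by exact_mod_cast hN
  have hc : ∀ p : Nat.Primes, (p : ℕ) ∉ D → c p = 0 := by
    intro p hp
    by_cases h : (p : ℕ) ∈ T
    · simp [c, i, h, hnon p h]
    · simp [c, i, h, hsplit p hp h, div_mul_cancel₀ _ hNR]
  have hcsum : Summable fun p => |c p| := by
    refine summable_of_hasFiniteSupport ((hD.preimage
      (f := ((↑) : Nat.Primes → ℕ)) Subtype.val_injective.injOn).subset ?_)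
    intro p hp
    by_contra h
    exact hp (by simp [hc p h])
  have hHlim : Tendsto (fun s => ∑' p, H s p) (nhdsWithin 1 (Set.Ioi 1))
      (nhds (∑' p, H 1 p)) := by
    refine tendsto_tsum_of_dominated_convergence
      (bound := fun p : Nat.Primes => |c p| + errConst M N * ((p : ℕ) : ℝ) ^ (-2 : ℝ))
      (hcsum.add ((Nat.Primes.summable_rpow.mpr (by norm_num)).mul_left _)) ?_ ?_
    · intro p
      have hcont := localLog_continuousOn (b := fun e => a (p ^ e)) (hb p) (by simp [h1]) M (i p)
      have hp0 : (0 : ℝ) < ((p : ℕ) : ℝ) := by exact_mod_cast p.2.pos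
      have hcomp : ContinuousOn (fun s => H s p) (Set.Ici 1) :=
        hcont.comp (f := fun s : ℝ => ((p : ℕ) : ℝ) ^ (-s))
          ((Continuous.rpow continuous_const continuous_neg
            fun _ => Or.inl hp0.ne').continuousOn) fun s hs => prime_rpow_neg_mem hs p
      exact (hcomp 1 Set.self_mem_Ici).mono_left (nhdsWithin_mono _ Set.Ioi_subset_Ici_self)
    · filter_upwards [self_mem_nhdsWithin] with s hs p
      have hs : 1 ≤ s := (Set.mem_Ioi.mp hs).le
      obtain ⟨hx0, hx1⟩ := prime_rpow_neg_mem hs p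
      have hsq := prime_rpow_neg_sq_le hs p
      have := abs_localLog_sub_le (b := fun e => a (p ^ e)) (hb p) (by simp [h1]) M
        (hi0 p) (hi1 p) hx0 hx1
      rw [Real.norm_eq_abs]
      calc |H s p| = |(H s p - c p * ((p : ℕ) : ℝ) ^ (-s)) + c p * ((p : ℕ) : ℝ) ^ (-s)| := by
            congr 1; ring
        _ ≤ |H s p - c p * ((p : ℕ) : ℝ) ^ (-s)| + |c p * ((p : ℕ) : ℝ) ^ (-s)| := abs_add_le _ _
        _ ≤ errConst M N * (((p : ℕ) : ℝ) ^ (-s)) ^ 2 + |c p| * 1 := by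
            rw [abs_mul, abs_of_nonneg hx0]
            gcongr
            linarith
        _ ≤ errConst M N * ((p : ℕ) : ℝ) ^ (-2 : ℝ) + |c p| * 1 := by
            have := errConst_nonneg M N
            gcongr
        _ = _ := by ring
  refine ⟨1 ^ (M : ℝ) * κ ^ (-(M / N : ℝ)) * Real.exp (∑' p, H 1 p), by positivity, ?_⟩
  have hmain : Tendsto (fun s : ℝ => ((s - 1) * ∑' n : ℕ, 1 / (n : ℝ) ^ s) ^ (M : ℝ) *
      ((s - 1) * ∑' n : ℕ, (a n : ℝ) * (n : ℝ) ^ (-s)) ^ (-(M / N : ℝ)) *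
      Real.exp (∑' p, H s p)) (nhdsWithin 1 (Set.Ioi 1))
      (nhds (1 ^ (M : ℝ) * κ ^ (-(M / N : ℝ)) * Real.exp (∑' p, H 1 p))) :=
    ((tendsto_sub_mul_tsum_nat_rpow.rpow_const (Or.inl one_ne_zero)).mul
      (hlim.rpow_const (Or.inl hκ.ne'))).mul ((Real.continuous_exp.tendsto _).comp hHlim)
  refine hmain.congr' ?_
  filter_upwards [self_mem_nhdsWithin, hlim.eventually_ne hκ.ne'] with s hs hne
  have hs : 1 < s := hs
  -- a divergent series would have the junk value `0`
  have hsum : Summable fun n : ℕ => (a n : ℝ) * (n : ℝ) ^ (-s) := by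
    by_contra h
    exact hne (by rw [tsum_eq_zero_of_not_summable h, mul_zero])
  obtain ⟨sK, eK⟩ := exp_tsum_log_localSeries h1 hmul hb hs hsum
  obtain ⟨sζ, eζ⟩ := exp_neg_tsum_log_one_sub hs
  obtain ⟨sF, eF⟩ := exp_tsum_log_indicator (M := M) hT hs
  have hH : ∑' p, H s p = (∑' p : Nat.Primes,
        (if (p : ℕ) ∈ T then (1 : ℝ) else 0) * Real.log (1 + M * ((p : ℕ) : ℝ) ^ (-s))) +
      M * ∑' p : Nat.Primes, Real.log (1 - ((p : ℕ) : ℝ) ^ (-s)) +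
      (M / N : ℝ) * ∑' p : Nat.Primes,
        Real.log (localSeries (fun e => a (p ^ e)) ((p : ℕ) ^ (-s))) := by
    rw [← tsum_mul_left, ← tsum_mul_left, ← sF.tsum_add (sζ.mul_left _),
      ← (sF.add (sζ.mul_left _)).tsum_add (sK.mul_left _)]
    rfl
  have hs0 : 0 < s - 1 := by linarith
  rw [← eK, ← eζ, ← eF, hH, Real.mul_rpow hs0.le (Real.exp_pos _).le,
    Real.mul_rpow hs0.le (Real.exp_pos _).le, ← Real.exp_mul, ← Real.exp_mul]
  have hexp : (M : ℝ) * (1 - 1 / (N : ℝ)) = M + (-(M / N : ℝ)) := by ring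
  rw [hexp, Real.rpow_add hs0, Real.exp_add, Real.exp_add, mul_comm (M : ℝ) (tsum _),
    mul_comm (M / N : ℝ) (tsum _), neg_mul, mul_neg, Real.exp_neg, Real.exp_neg]
  have n1 := Real.exp_ne_zero ((∑' p : Nat.Primes, Real.log (1 - ((p : ℕ) : ℝ) ^ (-s))) * M)
  have n2 := Real.exp_ne_zero ((∑' p : Nat.Primes,
        Real.log (localSeries (fun e => a (p ^ e)) ((p : ℕ) ^ (-s)))) * (M / N : ℝ))
  field_simp

end global

/-! ### The Dedekind zeta function -/

/-- The class number formula, for the Dirichlet series with real terms. -/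
lemma tendsto_sub_one_mul_tsum_idealCount (K : Type) [Field K] [NumberField K] :
    Tendsto (fun s : ℝ => (s - 1) * ∑' n : ℕ, (idealCount K n : ℝ) * (n : ℝ) ^ (-s))
      (nhdsWithin 1 (Set.Ioi 1)) (nhds (NumberField.dedekindZeta_residue K)) := by
  have h := NumberField.tendsto_sub_one_mul_dedekindZeta_nhdsGT K
  rw [← Filter.tendsto_ofReal_iff]
  refine h.congr' ?_
  filter_upwards [self_mem_nhdsWithin] with s hs
  have hs : 1 < s := hs
  push_cast
  congr 1
  refine tsum_congr fun n => ?_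
  rcases Nat.eq_zero_or_pos n with rfl | hn
  · simp [Real.zero_rpow (show -s ≠ 0 by linarith)]
  · rw [LSeries.term_of_ne_zero hn.ne', Complex.ofReal_cpow (Nat.cast_nonneg n)]
    push_cast
    rw [Complex.cpow_neg, div_eq_mul_inv]
    rfl

/-- For a Galois number field `K/ℚ` of degree `N ≥ 2`, `M ≥ 2`, and `Π_∪` the set of
unramified primes of residue degree `> 1` in `K`,
`(s−1)^{M(1−1/N)}·∏_{p∈Π_∪}(1 + M p^{−s})` tends to a positive constant as `s → 1⁺`. -/
theorem stmt_12 (K : Type) [Field K] [NumberField K] [IsGalois ℚ K]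
    (N : ℕ) (hN : 2 ≤ N) (hdeg : Module.finrank ℚ K = N) (M : ℕ) (hM : 2 ≤ M) :
    ∃ A : ℝ, 0 < A ∧
      Filter.Tendsto (fun s : ℝ => (s - 1) ^ ((M : ℝ) * (1 - 1 / (N : ℝ))) *
          ∏' p : {p : ℕ // p.Prime ∧ ¬ (p : ℤ) ∣ NumberField.discr K ∧
              ∃ r : ℕ, 1 < r ∧ ∀ P : Ideal (𝓞 K), P.IsPrime → ((p : ℕ) : 𝓞 K) ∈ P →
                Ideal.absNorm P = (p : ℕ) ^ r},
            (1 + (M : ℝ) * ((p : ℕ) : ℝ) ^ (-s)))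
        (nhdsWithin 1 (Set.Ioi 1)) (nhds A) := by
  refine tendsto_mul_tprod (a := idealCount K) (N := N) (M := M)
    (D := {p : ℕ | (p : ℤ) ∣ NumberField.discr K})
    (T := {p : ℕ | p.Prime ∧ ¬ (p : ℤ) ∣ NumberField.discr K ∧
              ∃ r : ℕ, 1 < r ∧ ∀ P : Ideal (𝓞 K), P.IsPrime → ((p : ℕ) : 𝓞 K) ∈ P →
                Ideal.absNorm P = (p : ℕ) ^ r})
    (idealCount_one K) (idealCount_mul K) (fun p e => ?_) (by omega) (fun p hp => hp.1) ?_
    (fun p hD hT => ?_) (fun p hp => idealCount_prime_nonsplit K hp.1 hp.2.2)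
    (NumberField.dedekindZeta_residue_pos K) (tendsto_sub_one_mul_tsum_idealCount K)
  · rw [← hdeg]
    exact idealCount_prime_pow_le K p.2 e
  · refine (Set.finite_Iic (NumberField.discr K).natAbs).subset fun p hp => ?_
    exact Nat.le_of_dvd (Int.natAbs_pos.mpr (NumberField.discr_ne_zero K))
      (Int.natCast_dvd.mp hp)
  · rw [← hdeg]
    exact idealCount_prime_split K p.2 hD fun h => hT ⟨p.2, hD, h⟩
end
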